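/- Let H₁, H₂ : 𝕋^n × ℝ^n → ℝ be continuous and satisfy (A1), let (u₁, u₂) be the viscosity solution of (C) with continuous initial data (u₀₁, u₀₂), and let c be the ergodic constant of (E). Then there exists a constant C > 0 such that |u_i(x,t) + ct| ≤ C for all (x,t) ∈ 𝕋^n × [0,∞) and i = 1,2. -/

import Mathlib

open MeasureTheory Filter Topology Set

noncomputable section

/-- Euclidean space `ℝ^n`; the torus `𝕋^n` is modelled by `ℤ^n`-periodic functions on it. -/
abbrev En (n : ℕ) : Type := EuclideanSpace ℝ (Fin n)

/-- The integer vector `k ∈ ℤ^n` viewed as an element of `ℝ^n`. -/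
def intVec (n : ℕ) (k : Fin n → ℤ) : En n := WithLp.toLp 2 (fun i => (k i : ℝ))

/-- A `ℤ^n`-periodic function on `ℝ^n`, i.e. a function on the torus `𝕋^n`. -/
def ZPeriodic {n : ℕ} (f : En n → ℝ) : Prop :=
  ∀ (x : En n) (k : Fin n → ℤ), f (x + intVec n k) = f x

/-- A Hamiltonian `H : 𝕋^n × ℝ^n → ℝ` (periodic in the first variable). -/
def ZPeriodicH {n : ℕ} (H : En n → En n → ℝ) : Prop :=
  ∀ (x : En n) (k : Fin n → ℤ) (p : En n), H (x + intVec n k) p = H x p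

/-- A function on `𝕋^n × ℝ` (space-time, periodic in space). -/
def ZPeriodicST {n : ℕ} (u : En n × ℝ → ℝ) : Prop :=
  ∀ (x : En n) (k : Fin n → ℤ) (t : ℝ), u (x + intVec n k, t) = u (x, t)

/-- (A1): coercivity, `lim_{r→∞} inf{H(x,p) : x ∈ 𝕋^n, |p| ≥ r} = ∞`. -/
def Coercive {n : ℕ} (H : En n → En n → ℝ) : Prop :=
  ∀ M : ℝ, ∃ r : ℝ, ∀ (x p : En n), r ≤ ‖p‖ → M ≤ H x p

/-- Coercivity for an `x`-independent Hamiltonian. -/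
def CoerciveP {n : ℕ} (H : En n → ℝ) : Prop :=
  ∀ M : ℝ, ∃ r : ℝ, ∀ p : En n, r ≤ ‖p‖ → M ≤ H p

/-- Lipschitz continuity (membership in `W^{1,∞}`). -/
def IsLip {n : ℕ} (f : En n → ℝ) : Prop := ∃ K : NNReal, LipschitzWith K f

/-- Viscosity subsolution inequality for one stationary equation
`H(x, Dw) + c (w - wo) ≤ ρ(x)` of a weakly coupled system. -/
def StatSubIneq {n : ℕ} (H : En n → En n → ℝ) (c : ℝ) (w wo : En n → ℝ) (ρ : En n → ℝ) : Prop :=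
  ∀ φ : En n → ℝ, ContDiff ℝ 1 φ →
    ∀ x₀ : En n, IsLocalMax (fun x => w x - φ x) x₀ →
      H x₀ (gradient φ x₀) + c * (w x₀ - wo x₀) ≤ ρ x₀

/-- Viscosity supersolution inequality for one stationary equation. -/
def StatSuperIneq {n : ℕ} (H : En n → En n → ℝ) (c : ℝ) (w wo : En n → ℝ) (ρ : En n → ℝ) : Prop :=
  ∀ φ : En n → ℝ, ContDiff ℝ 1 φ →
    ∀ x₀ : En n, IsLocalMin (fun x => w x - φ x) x₀ →
      ρ x₀ ≤ H x₀ (gradient φ x₀) + c * (w x₀ - wo x₀)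

/-- Viscosity subsolution of the stationary system
`Hᵢ(x, Dwᵢ) + cᵢ (wᵢ - wⱼ) = ρᵢ(x)`, `i = 1,2`. -/
def CellSub {n : ℕ} (H₁ H₂ : En n → En n → ℝ) (c₁ c₂ : ℝ) (w₁ w₂ : En n → ℝ)
    (ρ₁ ρ₂ : En n → ℝ) : Prop :=
  StatSubIneq H₁ c₁ w₁ w₂ ρ₁ ∧ StatSubIneq H₂ c₂ w₂ w₁ ρ₂

/-- Viscosity supersolution of the stationary system. -/
def CellSuper {n : ℕ} (H₁ H₂ : En n → En n → ℝ) (c₁ c₂ : ℝ) (w₁ w₂ : En n → ℝ)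
    (ρ₁ ρ₂ : En n → ℝ) : Prop :=
  StatSuperIneq H₁ c₁ w₁ w₂ ρ₁ ∧ StatSuperIneq H₂ c₂ w₂ w₁ ρ₂

/-- Viscosity solution (continuous, sub- and supersolution) of the stationary system. -/
def CellSolution {n : ℕ} (H₁ H₂ : En n → En n → ℝ) (c₁ c₂ : ℝ) (v₁ v₂ : En n → ℝ)
    (ρ₁ ρ₂ : En n → ℝ) : Prop :=
  Continuous v₁ ∧ Continuous v₂ ∧
    CellSub H₁ H₂ c₁ c₂ v₁ v₂ ρ₁ ρ₂ ∧ CellSuper H₁ H₂ c₁ c₂ v₁ v₂ ρ₁ ρ₂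

/-- Subsolution of the ergodic problem (E) with constant `c` (coupling constants 1). -/
def ErgSub {n : ℕ} (H₁ H₂ : En n → En n → ℝ) (v₁ v₂ : En n → ℝ) (c : ℝ) : Prop :=
  CellSub H₁ H₂ 1 1 v₁ v₂ (fun _ => c) (fun _ => c)

/-- Supersolution of the ergodic problem (E). -/
def ErgSuper {n : ℕ} (H₁ H₂ : En n → En n → ℝ) (v₁ v₂ : En n → ℝ) (c : ℝ) : Prop :=
  CellSuper H₁ H₂ 1 1 v₁ v₂ (fun _ => c) (fun _ => c)

/-- Viscosity solution of the ergodic problem (E):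
`H₁(x,Dv₁) + v₁ - v₂ = c`, `H₂(x,Dv₂) + v₂ - v₁ = c` on `𝕋^n`. -/
def ErgSolution {n : ℕ} (H₁ H₂ : En n → En n → ℝ) (v₁ v₂ : En n → ℝ) (c : ℝ) : Prop :=
  CellSolution H₁ H₂ 1 1 v₁ v₂ (fun _ => c) (fun _ => c)

/-- Viscosity subsolution inequality for one evolution equation
`∂ₜ u + H(x, Du) + u - uo ≤ 0` in `𝕋^n × (0,∞)`. -/
def EvolSubIneq {n : ℕ} (H : En n → En n → ℝ) (u uo : En n × ℝ → ℝ) : Prop :=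
  ∀ φ : En n × ℝ → ℝ, ContDiff ℝ 1 φ →
    ∀ (x₀ : En n) (t₀ : ℝ), 0 < t₀ →
      IsLocalMax (fun q => u q - φ q) (x₀, t₀) →
      fderiv ℝ φ (x₀, t₀) (0, 1) + H x₀ (gradient (fun y => φ (y, t₀)) x₀)
        + u (x₀, t₀) - uo (x₀, t₀) ≤ 0

/-- Viscosity supersolution inequality for one evolution equation. -/
def EvolSuperIneq {n : ℕ} (H : En n → En n → ℝ) (u uo : En n × ℝ → ℝ) : Prop :=
  ∀ φ : En n × ℝ → ℝ, ContDiff ℝ 1 φ →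
    ∀ (x₀ : En n) (t₀ : ℝ), 0 < t₀ →
      IsLocalMin (fun q => u q - φ q) (x₀, t₀) →
      0 ≤ fderiv ℝ φ (x₀, t₀) (0, 1) + H x₀ (gradient (fun y => φ (y, t₀)) x₀)
        + u (x₀, t₀) - uo (x₀, t₀)

/-- Viscosity subsolution of system (C) (with coupling constants `c₁ = c₂ = 1`). -/
def SysSub {n : ℕ} (H₁ H₂ : En n → En n → ℝ) (u₁ u₂ : En n × ℝ → ℝ) : Prop :=
  EvolSubIneq H₁ u₁ u₂ ∧ EvolSubIneq H₂ u₂ u₁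

/-- Viscosity supersolution of system (C). -/
def SysSuper {n : ℕ} (H₁ H₂ : En n → En n → ℝ) (u₁ u₂ : En n × ℝ → ℝ) : Prop :=
  EvolSuperIneq H₁ u₁ u₂ ∧ EvolSuperIneq H₂ u₂ u₁

/-- Viscosity solution of the Cauchy problem (C): continuous on `𝕋^n × [0,∞)`,
sub- and supersolution, attaining the initial data. -/
def SysSolution {n : ℕ} (H₁ H₂ : En n → En n → ℝ) (u₀₁ u₀₂ : En n → ℝ)
    (u₁ u₂ : En n × ℝ → ℝ) : Prop :=
  ContinuousOn u₁ {q : En n × ℝ | 0 ≤ q.2} ∧ ContinuousOn u₂ {q : En n × ℝ | 0 ≤ q.2} ∧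
    SysSub H₁ H₂ u₁ u₂ ∧ SysSuper H₁ H₂ u₁ u₂ ∧
    (∀ x, u₁ (x, 0) = u₀₁ x) ∧ (∀ x, u₂ (x, 0) = u₀₂ x)

/-- Viscosity subsolution of the single stationary equation `H(x,Dv) ≤ c` on `𝕋^n`. -/
def SingleSub {n : ℕ} (H : En n → En n → ℝ) (v : En n → ℝ) (c : ℝ) : Prop :=
  ∀ φ : En n → ℝ, ContDiff ℝ 1 φ →
    ∀ x₀ : En n, IsLocalMax (fun x => v x - φ x) x₀ → H x₀ (gradient φ x₀) ≤ c

/-- Viscosity supersolution of the single stationary equation `H(x,Dv) ≥ c` on `𝕋^n`. -/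
def SingleSuper {n : ℕ} (H : En n → En n → ℝ) (v : En n → ℝ) (c : ℝ) : Prop :=
  ∀ φ : En n → ℝ, ContDiff ℝ 1 φ →
    ∀ x₀ : En n, IsLocalMin (fun x => v x - φ x) x₀ → c ≤ H x₀ (gradient φ x₀)

/-- Viscosity solution of the single stationary equation `H(x,Dv) = c` on `𝕋^n`. -/
def SingleSolution {n : ℕ} (H : En n → En n → ℝ) (v : En n → ℝ) (c : ℝ) : Prop :=
  Continuous v ∧ SingleSub H v c ∧ SingleSuper H v c

/-- Uniform convergence `u(·,t) → v` on `𝕋^n` as `t → ∞`. -/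
def UnifTendsTo {n : ℕ} (u : En n × ℝ → ℝ) (v : En n → ℝ) : Prop :=
  ∀ ε : ℝ, 0 < ε → ∃ T : ℝ, ∀ t : ℝ, T ≤ t → ∀ x : En n, |u (x, t) - v x| ≤ ε

/-- (A8)⁺ at level `η` with constant `ψ`. -/
def A8plusAt {n : ℕ} (H : En n → En n → ℝ) (η ψ : ℝ) : Prop :=
  ∀ (x p q : En n), η ≤ H x (p + q) → H x q ≤ 0 →
    ∀ μ : ℝ, 0 < μ → μ ≤ 1 → H x (p + q) + ψ * (1 - μ) ≤ μ * H x (μ⁻¹ • p + q)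

/-- (A8)⁻ at level `η` with constant `ψ`. -/
def A8minusAt {n : ℕ} (H : En n → En n → ℝ) (η ψ : ℝ) : Prop :=
  ∀ (x p q : En n), H x (p + q) ≤ -η → 0 ≤ H x q →
    ∀ μ : ℝ, 1 ≤ μ → μ * H x (μ⁻¹ • p + q) ≤ H x (p + q) - ψ * (μ - 1) / μ

/-- (A8)⁺ with threshold `η₀`. -/
def A8plus {n : ℕ} (H : En n → En n → ℝ) (η₀ : ℝ) : Prop :=
  ∀ η : ℝ, 0 < η → η ≤ η₀ → ∃ ψ : ℝ, 0 < ψ ∧ A8plusAt H η ψ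

/-- (A8)⁻ with threshold `η₀`. -/
def A8minus {n : ℕ} (H : En n → En n → ℝ) (η₀ : ℝ) : Prop :=
  ∀ η : ℝ, 0 < η → η ≤ η₀ → ∃ ψ : ℝ, 0 < ψ ∧ A8minusAt H η ψ

/-- The function `F` of the Key Lemma: `F(r) = C r` for `r ≥ 0`, `F(r) = r / C` for `r < 0`. -/
def Fc (C r : ℝ) : ℝ := if 0 ≤ r then C * r else r / C

/-- `α_η⁺(s)` (resp. `β_η⁺(s)` with `u = u₂`):
`min_{x ∈ 𝕋^n, t ≥ s} (u(x,t) - v(x) + η (t-s)) / (u(x,s) - v(x))`. -/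
def alphaPlus {n : ℕ} (u : En n × ℝ → ℝ) (v : En n → ℝ) (η s : ℝ) : ℝ :=
  sInf {r : ℝ | ∃ (x : En n) (t : ℝ), s ≤ t ∧
    r = (u (x, t) - v x + η * (t - s)) / (u (x, s) - v x)}

/-- `α_η⁻(s)` (resp. `β_η⁻(s)` with `u = u₂`):
`max_{x ∈ 𝕋^n, t ≥ s} (u(x,t) - v(x) - η (t-s)) / (u(x,s) - v(x))`. -/
def alphaMinus {n : ℕ} (u : En n × ℝ → ℝ) (v : En n → ℝ) (η s : ℝ) : ℝ :=
  sSup {r : ℝ | ∃ (x : En n) (t : ℝ), s ≤ t ∧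
    r = (u (x, t) - v x - η * (t - s)) / (u (x, s) - v x)}

/-- (A9)⁺. -/
def A9plus {n : ℕ} (H : En n → En n → ℝ) : Prop :=
  ∃ K : Set (En n), IsClosed K ∧ (∀ x ∈ K, ∀ k : Fin n → ℤ, x + intVec n k ∈ K) ∧
    (∀ x ∈ K, (∀ p : En n, 0 ≤ H x p) ∧ ∃ p : En n, H x p = 0) ∧
    (∀ ε : ℝ, 0 < ε → ∃ η₀ : ℝ, 0 < η₀ ∧ ∃ ψ : ℝ → ℝ, (∀ r : ℝ, 0 < r → 0 < ψ r) ∧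
      ∀ η : ℝ, 0 < η → η ≤ η₀ → ∀ (x p q : En n), ε ≤ Metric.infDist x K →
        η ≤ H x (p + q) → H x q ≤ 0 →
        ∀ μ : ℝ, 0 < μ → μ ≤ 1 → H x (p + q) + ψ η * (1 - μ) ≤ μ * H x (μ⁻¹ • p + q))

/-- (A9)⁻. -/
def A9minus {n : ℕ} (H : En n → En n → ℝ) : Prop :=
  ∃ K : Set (En n), IsClosed K ∧ (∀ x ∈ K, ∀ k : Fin n → ℤ, x + intVec n k ∈ K) ∧
    (∀ x ∈ K, (∀ p : En n, 0 ≤ H x p) ∧ ∃ p : En n, H x p = 0) ∧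
    (∀ ε : ℝ, 0 < ε → ∃ η₀ : ℝ, 0 < η₀ ∧ ∃ ψ : ℝ → ℝ, (∀ r : ℝ, 0 < r → 0 < ψ r) ∧
      ∀ η : ℝ, 0 < η → η ≤ η₀ → ∀ (x p q : En n), ε ≤ Metric.infDist x K →
        H x (p + q) ≤ -η → 0 ≤ H x q →
        ∀ μ : ℝ, 1 ≤ μ → μ * H x (μ⁻¹ • p + q) ≤ H x (p + q) - ψ η * (μ - 1) / μ)

/-- (A6): uniform convexity of an `x`-independent Hamiltonian. -/
def UnifConvex {n : ℕ} (H : En n → ℝ) : Prop :=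
  ∃ α : ℝ, 0 < α ∧ ∀ᵐ q : En n ∂volume, DifferentiableAt ℝ H q ∧
    ∀ p : En n, H q + fderiv ℝ H q (p - q) + α * ‖p - q‖ ^ 2 ≤ H p

end

lemma exists_shift (n : ℕ) (x : En n) : ∃ k : Fin n → ℤ,
    x + intVec n k ∈ Metric.closedBall (0 : En n) (n + 1) := by
  refine ⟨fun i => -⌊x i⌋, ?_⟩
  rw [mem_closedBall_zero_iff]
  have h : ‖x + intVec n (fun i => -⌊x i⌋)‖ ^ 2 ≤ (n + 1 : ℝ) ^ 2 := by
    rw [EuclideanSpace.norm_sq_eq]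
    have : ∀ i ∈ Finset.univ, ‖(x + intVec n (fun i => -⌊x i⌋)) i‖ ^ 2 ≤ (1 : ℝ) := by
      intro i _
      have e : (x + intVec n (fun i => -⌊x i⌋)) i = Int.fract (x i) := by
        simp [intVec, Int.fract, sub_eq_add_neg]
      rw [e, Real.norm_eq_abs, sq_abs]
      nlinarith [Int.fract_nonneg (x i), Int.fract_lt_one (x i)]
    have h2 := Finset.sum_le_sum this
    simp at h2
    have : (0 : ℝ) ≤ n := by positivity
    simp only [PiLp.add_apply, Real.norm_eq_abs, sq_abs]
    nlinarith
  exact le_of_sq_le_sq h (by positivity)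

lemma periodic_bdd {n : ℕ} {v : En n → ℝ} (hv : Continuous v) (hp : ZPeriodic v) :
    ∃ B : ℝ, 0 ≤ B ∧ ∀ x, |v x| ≤ B := by
  obtain ⟨B, hB⟩ := (isCompact_closedBall (0 : En n) (n + 1)).exists_bound_of_continuousOn
    hv.continuousOn
  refine ⟨|B|, abs_nonneg _, fun x => ?_⟩
  obtain ⟨k, hk⟩ := exists_shift n x
  have := hB _ hk
  rw [hp, Real.norm_eq_abs] at this
  exact this.trans (le_abs_self _)

lemma hasGrad_quad {n : ℕ} (a N : ℝ) (x y : En n) :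
    HasGradientAt (fun z => a + N * ‖z - y‖ ^ 2) ((2 * N) • (x - y)) x := by
  rw [hasGradientAt_iff_hasFDerivAt]
  have h := ((((hasFDerivAt_id (𝕜 := ℝ) x).sub_const y).norm_sq).const_mul N).const_add a
  refine h.congr_fderiv ?_
  ext w
  simp
  ring

lemma hasGrad_sqrt {n : ℕ} (N d : ℝ) (hd : 0 < d) (x y : En n) :
    HasGradientAt (fun z => N * √(‖z - y‖ ^ 2 + d ^ 2))
      ((N / √(‖x - y‖ ^ 2 + d ^ 2)) • (x - y)) x := by
  rw [hasGradientAt_iff_hasFDerivAt]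
  have hne : ‖x - y‖ ^ 2 + d ^ 2 ≠ 0 := by positivity
  have h := (((((hasFDerivAt_id (𝕜 := ℝ) x).sub_const y).norm_sq).add_const (d ^ 2)).sqrt
    hne).const_mul N
  refine h.congr_fderiv ?_
  ext w
  simp
  field_simp

/-- a bound on gradients of upper test functions gives a Lipschitz estimate -/
lemma lip_of_sub {n : ℕ} {v : En n → ℝ} (hv : Continuous v) (hp : ZPeriodic v) {R : ℝ}
    (hR : 0 < R)
    (h : ∀ φ : En n → ℝ, ContDiff ℝ 1 φ → ∀ x₀ : En n, IsLocalMax (fun x => v x - φ x) x₀ →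
      ‖gradient φ x₀‖ ≤ R) (x y : En n) : v x - v y ≤ (2 * R) * ‖x - y‖ := by
  obtain ⟨B, hB0, hB⟩ := periodic_bdd hv hp
  have key : ∀ d : ℝ, 0 < d → ∃ z, ‖z - y‖ ≤ d ∧
      v x - 2 * R * (‖x - y‖ + d) ≤ v z := by
    intro d hd
    set φ : En n → ℝ := fun z => (2 * R) * √(‖z - y‖ ^ 2 + d ^ 2) with hφ
    have hφc : ContDiff ℝ 1 φ := by
      refine contDiff_const.mul (ContDiff.sqrt ?_ ?_)
      · exact ((contDiff_id.sub contDiff_const).norm_sq ℝ).add contDiff_const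
      · intro z; positivity
    have hlow : ∀ z, 2 * R * ‖z - y‖ ≤ φ z := by
      intro z
      have : ‖z - y‖ ≤ √(‖z - y‖ ^ 2 + d ^ 2) := Real.le_sqrt_of_sq_le (by nlinarith)
      simp only [hφ]
      gcongr
    have hlim : Tendsto (fun z => v z - φ z) (cocompact (En n)) atBot := by
      have h1 : Tendsto (fun z : En n => B + 2 * R * ‖y‖ - 2 * R * ‖z‖) (cocompact (En n)) atBot := by
        have := (tendsto_norm_cocompact_atTop (E := En n)).const_mul_atTop
          (show 0 < 2 * R by positivity)
        exact tendsto_atBot_add_const_left _ (B + 2 * R * ‖y‖) (tendsto_neg_atTop_atBot.comp this)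
      refine tendsto_atBot_mono (fun z => ?_) h1
      have h2 := hlow z
      have h3 := (abs_le.1 (hB z)).2
      have h4 : ‖z‖ ≤ ‖z - y‖ + ‖y‖ := by simpa using norm_add_le (z - y) y
      nlinarith
    obtain ⟨z, hz⟩ := (hv.sub hφc.continuous).exists_forall_ge hlim
    refine ⟨z, ?_, ?_⟩
    · have hg := h φ hφc z (Filter.Eventually.of_forall hz)
      rw [(hasGrad_sqrt (2 * R) d hd z y).gradient, norm_smul, Real.norm_eq_abs] at hg
      have hs : 0 < √(‖z - y‖ ^ 2 + d ^ 2) := Real.sqrt_pos.2 (by positivity)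
      have hs2 := Real.sq_sqrt (show 0 ≤ ‖z - y‖ ^ 2 + d ^ 2 by positivity)
      rw [abs_of_pos (by positivity), div_mul_eq_mul_div, div_le_iff₀ hs] at hg
      have hg' : 2 * ‖z - y‖ ≤ √(‖z - y‖ ^ 2 + d ^ 2) := by nlinarith
      have hn := norm_nonneg (z - y)
      nlinarith
    · have h1 : v x - φ x ≤ v z - φ z := hz x
      have h2 : 0 ≤ φ z := le_trans (by positivity) (hlow z)
      have h3 : φ x ≤ 2 * R * (‖x - y‖ + d) := by
        simp only [hφ]
        gcongr
        refine Real.sqrt_le_iff.2 ⟨by positivity, ?_⟩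
        nlinarith [norm_nonneg (x - y)]
      linarith
  refine le_of_forall_pos_le_add fun e he => ?_
  obtain ⟨δ, hδ, hδ'⟩ := Metric.continuous_iff.1 hv y (e / 2) (by positivity)
  obtain ⟨z, hz, hz'⟩ := key (min (δ / 2) (e / (4 * R))) (by positivity)
  have h1 := hδ' z (by
    rw [dist_eq_norm]; exact lt_of_le_of_lt (hz.trans (min_le_left _ _)) (by linarith))
  rw [Real.dist_eq] at h1
  have h2 := (abs_lt.1 h1).2
  have h3 : min (δ / 2) (e / (4 * R)) ≤ e / (4 * R) := min_le_right _ _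
  have h4 : 2 * R * min (δ / 2) (e / (4 * R)) ≤ e / 2 := by
    calc _ ≤ 2 * R * (e / (4 * R)) := by gcongr
      _ = e / 2 := by field_simp; norm_num
  nlinarith

lemma core {n : ℕ} {H : En n → En n → ℝ} {u uo : En n × ℝ → ℝ} {v vo : En n → ℝ} {c : ℝ}
    (hsub : EvolSubIneq H u uo) (hsup : StatSuperIneq H 1 v vo (fun _ => c))
    {m T N S : ℝ} {x y : En n} {t : ℝ} (ht : 0 < t) (htS : t < S)
    (hmax : ∀ x' y' t', 0 ≤ t' → t' ≤ S →
      u (x', t') + c * t' - v y' - N * ‖x' - y'‖ ^ 2 - Real.exp (m * (t' - T)) ≤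
      u (x, t) + c * t - v y - N * ‖x - y‖ ^ 2 - Real.exp (m * (t - T)))
    (hother : uo (x, t) - vo y ≤ u (x, t) - v y) :
    m * Real.exp (m * (t - T)) + H x ((2 * N) • (x - y)) - H y ((2 * N) • (x - y)) ≤ 0 := by
  have h1 := hsub (fun q => (- c * q.2 + Real.exp (m * (q.2 - T))) + N * ‖q.1 - y‖ ^ 2)
    (by
      refine ContDiff.add (by fun_prop) (contDiff_const.mul ?_)
      exact (contDiff_fst.sub contDiff_const).norm_sq ℝ) x t ht (by
      have : ∀ᶠ q : En n × ℝ in 𝓝 (x, t), q.2 ∈ Ioo 0 S :=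
        continuous_snd.continuousAt.eventually (Ioo_mem_nhds ht htS)
      filter_upwards [this] with q hq
      have := hmax q.1 y q.2 hq.1.le hq.2.le
      simp only [Prod.mk.eta] at this
      linarith)
  have h2 := hsup (fun z => 0 + (-N) * ‖z - x‖ ^ 2)
    (contDiff_const.add (contDiff_const.mul ((contDiff_id.sub contDiff_const).norm_sq ℝ))) y (by
      refine Filter.Eventually.of_forall fun z => ?_
      have := hmax x z t ht.le htS.le
      simp only
      rw [norm_sub_rev z x, norm_sub_rev y x]
      linarith)
  rw [(hasGrad_quad 0 (-N) y x).gradient] at h2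
  rw [(hasGrad_quad (- c * t + Real.exp (m * (t - T))) N x y).gradient] at h1
  have hfd : fderiv ℝ (fun q : En n × ℝ => (- c * q.2 + Real.exp (m * (q.2 - T)))
      + N * ‖q.1 - y‖ ^ 2) (x, t) (0, 1) = - c + m * Real.exp (m * (t - T)) := by
    have a1 : HasFDerivAt (fun q : En n × ℝ => q.2) (ContinuousLinearMap.snd ℝ (En n) ℝ) (x, t) :=
      hasFDerivAt_snd
    have a2 : HasFDerivAt (fun q : En n × ℝ => q.1) (ContinuousLinearMap.fst ℝ (En n) ℝ) (x, t) :=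
      hasFDerivAt_fst
    have := ((a1.const_mul (-c)).add (((a1.sub_const T).const_mul m).exp)).add
      (((a2.sub_const y).norm_sq).const_mul N)
    refine (congrArg (fun l => l ((0 : En n), (1 : ℝ))) (HasFDerivAt.fderiv this)).trans ?_
    simp
    ring
  rw [hfd] at h1
  have e : (2 * -N) • (y - x) = (2 * N) • (x - y) := by
    rw [← neg_sub x y, smul_neg, ← neg_smul]; ring_nf
  rw [e] at h2
  linarith

lemma exists_max {n : ℕ} {u : En n × ℝ → ℝ} {v : En n → ℝ} {c : ℝ}
    (hu : ContinuousOn u {q : En n × ℝ | 0 ≤ q.2}) (hup : ZPeriodicST u)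
    (hv : Continuous v) (hvp : ZPeriodic v) {L : ℝ} (hL : 0 < L)
    (hlip : ∀ x y, v x - v y ≤ L * ‖x - y‖) {m T N S : ℝ} (hN : 0 < N) (hS : 0 ≤ S) :
    ∃ x y t, x ∈ Metric.closedBall (0 : En n) (n + 1) ∧ ‖x - y‖ ≤ L / N ∧ 0 ≤ t ∧ t ≤ S ∧
      ∀ x' y' t', 0 ≤ t' → t' ≤ S →
      u (x', t') + c * t' - v y' - N * ‖x' - y'‖ ^ 2 - Real.exp (m * (t' - T)) ≤
      u (x, t) + c * t - v y - N * ‖x - y‖ ^ 2 - Real.exp (m * (t - T)) := by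
  set F : En n × En n × ℝ → ℝ := fun q =>
    u (q.1, q.2.2) + c * q.2.2 - v (q.1 - q.2.1) - N * ‖q.2.1‖ ^ 2
      - Real.exp (m * (q.2.2 - T)) with hF
  have hLN : 0 < L / N := by positivity
  have hK : IsCompact ((Metric.closedBall (0 : En n) (n + 1)) ×ˢ
      ((Metric.closedBall (0 : En n) (L / N)) ×ˢ (Icc (0 : ℝ) S))) :=
    (isCompact_closedBall _ _).prod ((isCompact_closedBall _ _).prod isCompact_Icc)
  have hne : ((Metric.closedBall (0 : En n) (n + 1)) ×ˢ
      ((Metric.closedBall (0 : En n) (L / N)) ×ˢ (Icc (0 : ℝ) S))).Nonempty := by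
    refine ⟨(0, 0, 0), ?_, ?_, ?_⟩
    · simp; positivity
    · simp; positivity
    · simp [hS]
  have hFc : ContinuousOn F ((Metric.closedBall (0 : En n) (n + 1)) ×ˢ
      ((Metric.closedBall (0 : En n) (L / N)) ×ˢ (Icc (0 : ℝ) S))) := by
    have h1 : ContinuousOn (fun q : En n × En n × ℝ => u (q.1, q.2.2))
        ((Metric.closedBall (0 : En n) (n + 1)) ×ˢ
      ((Metric.closedBall (0 : En n) (L / N)) ×ˢ (Icc (0 : ℝ) S))) := by
      refine hu.comp (Continuous.continuousOn (by fun_prop)) ?_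
      intro q hq
      exact hq.2.2.1
    have h2 : Continuous (fun q : En n × En n × ℝ => v (q.1 - q.2.1)) := by fun_prop
    have h3 : Continuous (fun q : En n × En n × ℝ => c * q.2.2) := by fun_prop
    have h4 : Continuous (fun q : En n × En n × ℝ => N * ‖q.2.1‖ ^ 2) := by fun_prop
    have h5 : Continuous (fun q : En n × En n × ℝ => Real.exp (m * (q.2.2 - T))) := by fun_prop
    exact (((h1.add h3.continuousOn).sub h2.continuousOn).sub h4.continuousOn).sub h5.continuousOn
  obtain ⟨⟨x, z, t⟩, ⟨hx, hz, ht⟩, hmax⟩ := hK.exists_isMaxOn hne hFc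
  simp only at hx hz ht
  refine ⟨x, x - z, t, hx, by simpa using hz, ht.1, ht.2, ?_⟩
  intro x' y' t' ht0 htS
  obtain ⟨k, hk⟩ := exists_shift n x'
  have aux : ∀ z' : En n, ‖z'‖ ≤ L / N →
      u (x', t') + c * t' - v (x' - z') - N * ‖z'‖ ^ 2 - Real.exp (m * (t' - T)) ≤ F (x, z, t) := by
    intro z' hz'
    have h := hmax (show (x' + intVec n k, z', t') ∈ _ from ⟨hk, by simpa using hz', ht0, htS⟩)
    have h' : F (x' + intVec n k, z', t') ≤ F (x, z, t) := h
    have e : x' + intVec n k - z' = (x' - z') + intVec n k := by abel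
    simp only [hF] at h' ⊢
    rwa [hup, e, hvp] at h'
  have goal : u (x', t') + c * t' - v y' - N * ‖x' - y'‖ ^ 2 - Real.exp (m * (t' - T))
      ≤ F (x, z, t) := by
    by_cases hc : ‖x' - y'‖ ≤ L / N
    · simpa using aux (x' - y') hc
    · have h := aux 0 (by simpa using hLN.le)
      have h2 := hlip x' y'
      push Not at hc
      rw [div_lt_iff₀ hN] at hc
      have h3 := norm_nonneg (x' - y')
      simp only [sub_zero, norm_zero] at h
      nlinarith
  simpa [hF] using goal

lemma u_bdd {n : ℕ} {u : En n × ℝ → ℝ}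
    (hu : ContinuousOn u {q : En n × ℝ | 0 ≤ q.2}) (S : ℝ) :
    ∃ B : ℝ, 0 ≤ B ∧ ∀ x ∈ Metric.closedBall (0 : En n) (n + 1), ∀ t, 0 ≤ t → t ≤ S →
      |u (x, t)| ≤ B := by
  obtain ⟨B, hB⟩ := ((isCompact_closedBall (0 : En n) (n + 1)).prod
    (isCompact_Icc (a := (0 : ℝ)) (b := S))).exists_bound_of_continuousOn
    (hu.mono fun q hq => hq.2.1)
  refine ⟨|B|, abs_nonneg _, fun x hx t ht ht' => ?_⟩
  exact (hB (x, t) ⟨hx, ht, ht'⟩).trans (le_abs_self _)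

lemma H_unif {n : ℕ} {H : En n → En n → ℝ}
    (hH : Continuous fun q : En n × En n => H q.1 q.2) (P lam : ℝ) (hl : 0 < lam) :
    ∃ δ, 0 < δ ∧ ∀ x y p, x ∈ Metric.closedBall (0 : En n) (n + 1) → ‖p‖ ≤ P → ‖x - y‖ ≤ δ →
      H y p - H x p < lam := by
  have hK := (isCompact_closedBall (0 : En n) (n + 2)).prod (isCompact_closedBall (0 : En n) P)
  obtain ⟨δ, hδ, h⟩ := Metric.uniformContinuousOn_iff.1
    (hK.uniformContinuousOn_of_continuous hH.continuousOn) lam hl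
  refine ⟨min (δ / 2) 1, by positivity, fun x y p hx hp hxy => ?_⟩
  rw [mem_closedBall_zero_iff] at hx
  have h1 : ‖x - y‖ ≤ 1 := hxy.trans (min_le_right _ _)
  have h2 : ‖x - y‖ ≤ δ / 2 := hxy.trans (min_le_left _ _)
  have h3 : ‖y‖ ≤ ‖x‖ + ‖x - y‖ := by
    have := norm_sub_le x (x - y)
    simpa using this
  have := h (y, p) ⟨by rw [mem_closedBall_zero_iff]; simp only; linarith, by simpa using hp⟩
    (x, p) ⟨by rw [mem_closedBall_zero_iff]; simp only; linarith, by simpa using hp⟩ (by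
      rw [Prod.dist_eq, dist_self, max_eq_left dist_nonneg, dist_comm, dist_eq_norm]
      simp only
      linarith)
  rw [Real.dist_eq] at this
  exact (abs_lt.1 this).2

/-- one-index half of the comparison argument -/
lemma half {n : ℕ} {H : En n → En n → ℝ} {u uo : En n × ℝ → ℝ} {v vo : En n → ℝ} {c : ℝ}
    (hsub : EvolSubIneq H u uo) (hsup : StatSuperIneq H 1 v vo (fun _ => c))
    {m T N L B lam : ℝ} {x y : En n} {t : ℝ} (hm : 0 < m) (hT : 0 ≤ T) (hN : 0 < N)
    (hBm : 2 * B ≤ m)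
    (hlam : lam = m * Real.exp (m * (0 - T)))
    (hxy : ‖x - y‖ ≤ L / N) (ht : 0 ≤ t) (htS : t ≤ T + 1)
    (hHu : ∀ p, ‖p‖ ≤ 2 * L → H y p - H x p < lam)
    (hB : ∀ s, 0 ≤ s → s ≤ T + 1 → |u (x, s) + c * s| ≤ B)
    (hmax : ∀ x' y' t', 0 ≤ t' → t' ≤ T + 1 →
      u (x', t') + c * t' - v y' - N * ‖x' - y'‖ ^ 2 - Real.exp (m * (t' - T)) ≤
      u (x, t) + c * t - v y - N * ‖x - y‖ ^ 2 - Real.exp (m * (t - T)))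
    (hother : uo (x, t) - vo y ≤ u (x, t) - v y) : t = 0 := by
  by_contra hne
  have ht0 : 0 < t := lt_of_le_of_ne ht (Ne.symm hne)
  have htS' : t < T + 1 := by
    refine lt_of_le_of_ne htS fun h => ?_
    have h0 := hmax x y 0 le_rfl (by linarith)
    have b0 := (abs_le.1 (hB 0 le_rfl (by linarith))).1
    have b1 := (abs_le.1 (hB t ht htS)).2
    have e0 : Real.exp (m * (0 - T)) ≤ 1 := Real.exp_le_one_iff.2 (by nlinarith)
    have e1 : m * (t - T) = m := by rw [h]; ring
    rw [e1] at h0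
    have e2 := Real.add_one_lt_exp hm.ne'
    linarith
  have hc := core hsub hsup ht0 htS' hmax hother
  have hp : ‖(2 * N) • (x - y)‖ ≤ 2 * L := by
    rw [norm_smul, Real.norm_eq_abs, abs_of_pos (by positivity)]
    rw [le_div_iff₀ hN] at hxy
    linarith
  have h1 := hHu _ hp
  have h2 : lam ≤ m * Real.exp (m * (t - T)) := by
    rw [hlam]
    gcongr
  linarith

lemma upper {n : ℕ} {H₁ H₂ : En n → En n → ℝ}
    (hH₁ : Continuous fun q : En n × En n => H₁ q.1 q.2)
    (hH₂ : Continuous fun q : En n × En n => H₂ q.1 q.2)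
    {u₁ u₂ : En n × ℝ → ℝ} (hu₁p : ZPeriodicST u₁) (hu₂p : ZPeriodicST u₂)
    (hu₁ : ContinuousOn u₁ {q : En n × ℝ | 0 ≤ q.2})
    (hu₂ : ContinuousOn u₂ {q : En n × ℝ | 0 ≤ q.2})
    (hs : SysSub H₁ H₂ u₁ u₂)
    {c : ℝ} {v₁ v₂ : En n → ℝ} (hv₁p : ZPeriodic v₁) (hv₂p : ZPeriodic v₂)
    (hv₁ : Continuous v₁) (hv₂ : Continuous v₂) (he : ErgSuper H₁ H₂ v₁ v₂ c)
    {L : ℝ} (hL : 0 < L) (hl₁ : ∀ x y, v₁ x - v₁ y ≤ L * ‖x - y‖)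
    (hl₂ : ∀ x y, v₂ x - v₂ y ≤ L * ‖x - y‖) :
    ∃ C : ℝ, ∀ (x : En n) (t : ℝ), 0 ≤ t → u₁ (x, t) + c * t ≤ C ∧ u₂ (x, t) + c * t ≤ C := by
  obtain ⟨V₁, hV₁0, hV₁⟩ := periodic_bdd hv₁ hv₁p
  obtain ⟨V₂, hV₂0, hV₂⟩ := periodic_bdd hv₂ hv₂p
  obtain ⟨U₁, hU₁0, hU₁⟩ := u_bdd hu₁ 0
  obtain ⟨U₂, hU₂0, hU₂⟩ := u_bdd hu₂ 0
  refine ⟨U₁ + U₂ + 2 * V₁ + 2 * V₂ + 1, fun x₀ T hT => ?_⟩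
  obtain ⟨B₁, hB₁0, hB₁⟩ := u_bdd hu₁ (T + 1)
  obtain ⟨B₂, hB₂0, hB₂⟩ := u_bdd hu₂ (T + 1)
  set B := B₁ + B₂ + |c| * (T + 1) with hBdef
  have hct : ∀ s, 0 ≤ s → s ≤ T + 1 → |c * s| ≤ |c| * (T + 1) := by
    intro s h0 h1
    rw [abs_mul, abs_of_nonneg h0]
    gcongr
  have hB0 : 0 ≤ B := by positivity
  set m := 2 * B + 1 with hm
  have hm0 : 0 < m := by positivity
  set lam := m * Real.exp (m * (0 - T)) with hlam
  have hlam0 : 0 < lam := by positivity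
  obtain ⟨δ₁, hδ₁, hd₁⟩ := H_unif hH₁ (2 * L) lam hlam0
  obtain ⟨δ₂, hδ₂, hd₂⟩ := H_unif hH₂ (2 * L) lam hlam0
  set N := L / min δ₁ δ₂ with hNdef
  have hN : 0 < N := by positivity
  have hLN : L / N = min δ₁ δ₂ := by rw [hNdef]; field_simp
  obtain ⟨x, y, t, hx, hxy, ht, htS, hmax⟩ := exists_max (c := c) (m := m) (T := T) hu₁ hu₁p
    hv₁ hv₁p hL hl₁ hN (show 0 ≤ T + 1 by linarith)
  obtain ⟨x', y', t', hx', hxy', ht', htS', hmax'⟩ := exists_max (c := c) (m := m) (T := T) hu₂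
    hu₂p hv₂ hv₂p hL hl₂ hN (show 0 ≤ T + 1 by linarith)
  have r₁ := hmax x₀ x₀ T hT (by linarith)
  have r₂ := hmax' x₀ x₀ T hT (by linarith)
  simp only [sub_self, norm_zero, mul_zero, Real.exp_zero] at r₁ r₂
  have a₁ := abs_le.1 (hV₁ x₀)
  have a₂ := abs_le.1 (hV₂ x₀)
  rcases le_total (u₂ (x', t') + c * t' - v₂ y' - N * ‖x' - y'‖ ^ 2 - Real.exp (m * (t' - T)))
    (u₁ (x, t) + c * t - v₁ y - N * ‖x - y‖ ^ 2 - Real.exp (m * (t - T))) with hle | hle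
  · have t0 : t = 0 := by
      refine half (B := B) (L := L) hs.1 he.1 hm0 hT hN (by linarith) hlam hxy ht htS ?_ ?_ hmax ?_
      · intro p hp
        exact hd₁ x y p hx hp (hxy.trans (hLN.le.trans (min_le_left _ _)))
      · intro s h0 h1
        have := abs_add_le (u₁ (x, s)) (c * s)
        linarith [hB₁ x hx s h0 h1, hct s h0 h1]
      · have := (hmax' x y t ht htS).trans hle
        linarith
    have e1 := Real.exp_pos (m * (t - T))
    have e2 : 0 ≤ N * ‖x - y‖ ^ 2 := by positivity
    have b1 := (abs_le.1 (hU₁ x hx t ht t0.le)).2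
    have b2 := (abs_le.1 (hV₁ y)).1
    have e3 : c * t = 0 := by rw [t0, mul_zero]
    constructor <;> linarith
  · have t0 : t' = 0 := by
      refine half (B := B) (L := L) hs.2 he.2 hm0 hT hN (by linarith) hlam hxy' ht' htS' ?_ ?_
        hmax' ?_
      · intro p hp
        exact hd₂ x' y' p hx' hp (hxy'.trans (hLN.le.trans (min_le_right _ _)))
      · intro s h0 h1
        have := abs_add_le (u₂ (x', s)) (c * s)
        linarith [hB₂ x' hx' s h0 h1, hct s h0 h1]
      · have := (hmax x' y' t' ht' htS').trans hle
        linarith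
    have e1 := Real.exp_pos (m * (t' - T))
    have e2 : 0 ≤ N * ‖x' - y'‖ ^ 2 := by positivity
    have b1 := (abs_le.1 (hU₂ x' hx' t' ht' t0.le)).2
    have b2 := (abs_le.1 (hV₂ y')).1
    have e3 : c * t' = 0 := by rw [t0, mul_zero]
    constructor <;> linarith

lemma gradient_neg' {n : ℕ} (φ : En n → ℝ) (x : En n) :
    gradient (fun y => -φ y) x = -gradient φ x := by
  unfold gradient
  rw [fderiv_fun_neg, map_neg]

lemma evol_neg {n : ℕ} {H : En n → En n → ℝ} {u uo : En n × ℝ → ℝ} (h : EvolSuperIneq H u uo) :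
    EvolSubIneq (fun x p => - H x (-p)) (fun q => - u q) (fun q => - uo q) := by
  intro φ hφ x t ht hmax
  have := h (fun q => - φ q) hφ.neg x t ht (by
    filter_upwards [hmax] with q hq
    linarith)
  rw [gradient_neg', fderiv_fun_neg] at this
  simp only [neg_apply] at this
  linarith

lemma stat_neg {n : ℕ} {H : En n → En n → ℝ} {v vo : En n → ℝ} {c : ℝ}
    (h : StatSubIneq H 1 v vo (fun _ => c)) :
    StatSuperIneq (fun x p => - H x (-p)) 1 (fun q => - v q) (fun q => - vo q)
      (fun _ => -c) := by
  intro φ hφ x hmin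
  have := h (fun q => - φ q) hφ.neg x (by
    filter_upwards [hmin] with q hq
    linarith)
  rw [gradient_neg'] at this
  linarith

lemma erg_lip {n : ℕ} {H : En n → En n → ℝ} (hco : Coercive H) {v vo : En n → ℝ} {c : ℝ}
    (hv : Continuous v) (hvp : ZPeriodic v) (hvo : Continuous vo) (hvop : ZPeriodic vo)
    (h : StatSubIneq H 1 v vo (fun _ => c)) :
    ∃ L, 0 < L ∧ ∀ x y, v x - v y ≤ L * ‖x - y‖ := by
  obtain ⟨V₁, hV₁0, hV₁⟩ := periodic_bdd hv hvp
  obtain ⟨V₂, hV₂0, hV₂⟩ := periodic_bdd hvo hvop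
  obtain ⟨r, hr⟩ := hco (c + V₁ + V₂ + 1)
  have hR : 0 < |r| + 1 := by positivity
  refine ⟨2 * (|r| + 1), by positivity, lip_of_sub hv hvp hR ?_⟩
  intro φ hφ x hmax
  have h1 := h φ hφ x hmax
  by_contra hc
  push Not at hc
  have h2 := hr x (gradient φ x) (by linarith [le_abs_self r])
  have h3 := (abs_le.1 (hV₁ x)).1
  have h4 := (abs_le.1 (hV₂ x)).2
  linarith

/-- Boundedness of solutions of (C): `|uᵢ(x,t) + c t| ≤ C`. -/
theorem stmt2 (n : ℕ) (hn : 1 ≤ n) (H₁ H₂ : En n → En n → ℝ)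
    (hH₁cont : Continuous fun q : En n × En n => H₁ q.1 q.2)
    (hH₂cont : Continuous fun q : En n × En n => H₂ q.1 q.2)
    (hH₁per : ZPeriodicH H₁) (hH₂per : ZPeriodicH H₂)
    (hH₁coer : Coercive H₁) (hH₂coer : Coercive H₂)
    (u₀₁ u₀₂ : En n → ℝ) (hu₀₁ : Continuous u₀₁) (hu₀₂ : Continuous u₀₂)
    (hu₀₁per : ZPeriodic u₀₁) (hu₀₂per : ZPeriodic u₀₂)
    (u₁ u₂ : En n × ℝ → ℝ) (hu₁per : ZPeriodicST u₁) (hu₂per : ZPeriodicST u₂)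
    (hsol : SysSolution H₁ H₂ u₀₁ u₀₂ u₁ u₂)
    (c : ℝ) (v₁ v₂ : En n → ℝ) (hv₁per : ZPeriodic v₁) (hv₂per : ZPeriodic v₂)
    (herg : ErgSolution H₁ H₂ v₁ v₂ c) :
    ∃ C : ℝ, 0 < C ∧ ∀ (x : En n) (t : ℝ), 0 ≤ t →
      |u₁ (x, t) + c * t| ≤ C ∧ |u₂ (x, t) + c * t| ≤ C := by
  obtain ⟨hc₁, hc₂, hsub, hsup, -, -⟩ := hsol
  obtain ⟨hv₁, hv₂, esub, esup⟩ := herg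
  obtain ⟨L₁, hL₁, hl₁⟩ := erg_lip hH₁coer hv₁ hv₁per hv₂ hv₂per esub.1
  obtain ⟨L₂, hL₂, hl₂⟩ := erg_lip hH₂coer hv₂ hv₂per hv₁ hv₁per esub.2
  have hL : 0 < L₁ + L₂ := by positivity
  have hl₁' : ∀ x y, v₁ x - v₁ y ≤ (L₁ + L₂) * ‖x - y‖ := fun x y => by
    nlinarith [hl₁ x y, norm_nonneg (x - y)]
  have hl₂' : ∀ x y, v₂ x - v₂ y ≤ (L₁ + L₂) * ‖x - y‖ := fun x y => by
    nlinarith [hl₂ x y, norm_nonneg (x - y)]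
  obtain ⟨C, hC⟩ := upper hH₁cont hH₂cont hu₁per hu₂per hc₁ hc₂ hsub hv₁per hv₂per hv₁ hv₂ esup
    hL hl₁' hl₂'
  obtain ⟨D, hD⟩ := upper (H₁ := fun x p => - H₁ x (-p)) (H₂ := fun x p => - H₂ x (-p))
    (u₁ := fun q => - u₁ q) (u₂ := fun q => - u₂ q) (c := -c)
    (v₁ := fun q => - v₁ q) (v₂ := fun q => - v₂ q) (L := L₁ + L₂)
    (hH₁cont.comp (continuous_fst.prodMk continuous_snd.neg)).neg
    (hH₂cont.comp (continuous_fst.prodMk continuous_snd.neg)).neg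
    (fun x k t => by simp only; rw [hu₁per]) (fun x k t => by simp only; rw [hu₂per])
    hc₁.neg hc₂.neg ⟨evol_neg hsup.1, evol_neg hsup.2⟩
    (fun x k => by simp only; rw [hv₁per]) (fun x k => by simp only; rw [hv₂per])
    hv₁.neg hv₂.neg ⟨stat_neg esub.1, stat_neg esub.2⟩ hL
    (fun x y => by have := hl₁' y x; rw [norm_sub_rev] at this; linarith)
    (fun x y => by have := hl₂' y x; rw [norm_sub_rev] at this; linarith)
  refine ⟨|C| + |D| + 1, by positivity, fun x t ht => ?_⟩
  have h1 := hC x t ht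
  have h2 := hD x t ht
  have := le_abs_self C
  have := le_abs_self D
  have := abs_nonneg C
  have := abs_nonneg D
  constructor <;> rw [abs_le] <;> constructor <;> linarith [h1.1, h1.2, h2.1, h2.2]
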